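/- arXiv:1807.05869 — 2 statements merged into one kernel-verified Lean document; each statement's English description precedes it below -/
import Mathlib

section
/- Let A be a graded Artinian algebra over a field k and let ℓ ∈ m_A be any (possibly non-homogeneous) element. Then P_ℓ ≤ H(Gr_{m_A}(A))^∨ in the dominance order, where Gr_{m_A}(A) is the associated graded algebra of A with respect to its maximal graded ideal. -/
/-- `P` is the Jordan type (multiset of Jordan block sizes) of the `k`-linear
endomorphism `f`, characterized by the ranks of the powers of `f`. -/
def IsJordanTypeOf {k A : Type*} [Field k] [AddCommGroup A] [Module k A]
    (f : A →ₗ[k] A) (P : Multiset ℕ) : Prop :=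
  (∀ p ∈ P, 0 < p) ∧
  ∀ j : ℕ, Module.finrank k (LinearMap.range (f ^ j)) = (P.map (fun p => p - j)).sum

/-- Dominance order on partitions (as multisets of parts): `DomLE P Q` means
`P ≤ Q` in the dominance order. -/
def DomLE (P Q : Multiset ℕ) : Prop :=
  P.sum = Q.sum ∧
  ∀ i : ℕ, ((P.sort (· ≥ ·)).take i).sum ≤ ((Q.sort (· ≥ ·)).take i).sum

/-- The conjugate partition of a Hilbert function `H` (whose values are bounded
by `n`): its `i`-th part (for `1 ≤ i ≤ n`) is `#{d | H d ≥ i}`; zero parts are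
discarded. -/
noncomputable def conjHilb (H : ℕ → ℕ) (n : ℕ) : Multiset ℕ :=
  ((Multiset.range n).map (fun i => Set.ncard {d : ℕ | i + 1 ≤ H d})).filter (fun c => 0 < c)

/-- The maximal graded ideal of a graded algebra, generated by the homogeneous
elements of positive degree. -/
def gradedMaxIdeal {k A : Type*} [Field k] [CommRing A] [Algebra k A]
    (𝒜 : ℕ → Submodule k A) : Ideal A :=
  Ideal.span {x : A | ∃ i : ℕ, x ∈ 𝒜 (i + 1)}

/-- The Hilbert function of the associated graded algebra `Gr_m(A) = ⊕ mⁱ/mⁱ⁺¹`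
of an Artinian local (or graded) algebra with respect to the ideal `m`:
`H i = dim_k mⁱ/mⁱ⁺¹ = dim_k mⁱ − dim_k mⁱ⁺¹`. -/
noncomputable def grHilb (k : Type*) {A : Type*} [Field k] [CommRing A] [Algebra k A]
    (m : Ideal A) : ℕ → ℕ :=
  fun i => Module.finrank k ((m ^ i).restrictScalars k)
    - Module.finrank k ((m ^ (i + 1)).restrictScalars k)

/-!
The conjugate partition satisfies `∑_{r < i} (H^∨)_r = ∑_d min (H d) i`, so dominance amounts to
bounding the sum of any `i` parts of `P` by this quantity.

The powers `F d = m ^ d` form a finite filtration which `f = (ℓ * ·)` shifts by one step, and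
`H d = dim F d - dim F (d + 1)`.  Descend the filtration from `F 0`: a step at a degree with
`i < H d` is paid for by one application of `f`, any other step costs at most `H d` in dimension.
If `c` is the number of degrees of the first kind, this gives `rank (f ^ c) ≤ ∑_{H d ≤ i} H d`.
Hence the sum of `i` parts of `P` is at most
`i * c + ∑_p (p - c) = i * c + rank (f ^ c) ≤ ∑_d min (H d) i`.

The filtration is finite because homogeneous elements of positive degree are nilpotent.
-/

open Module

section Filtration

variable {K V : Type*} [DivisionRing K] [AddCommGroup V] [Module K V]

/-- The Hilbert function of a decreasing filtration `F`, i.e. the dimensions of the graded pieces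
`F d / F (d + 1)`, encoded as differences of dimensions (truncated if `F` is not decreasing).
For `F d = m ^ d` it is definitionally `grHilb k m`. -/
noncomputable def filtrationHilb (F : ℕ → Submodule K V) (d : ℕ) : ℕ :=
  finrank K (F d) - finrank K (F (d + 1))

theorem filtrationHilb_eq_zero {F : ℕ → Submodule K V} (hF : Antitone F) {N d : ℕ}
    (hN : F N = ⊥) (hd : N ≤ d) : filtrationHilb F d = 0 := by
  have hFd : F d = ⊥ := le_bot_iff.1 (hN ▸ hF hd)
  rw [filtrationHilb, hFd, finrank_bot, Nat.zero_sub]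

variable [FiniteDimensional K V]

theorem filtrationHilb_le_finrank (F : ℕ → Submodule K V) (d : ℕ) :
    filtrationHilb F d ≤ finrank K V :=
  (Nat.sub_le _ _).trans (Submodule.finrank_le _)

theorem filtrationHilb_add_finrank_succ {F : ℕ → Submodule K V} (hF : Antitone F) (d : ℕ) :
    filtrationHilb F d + finrank K (F (d + 1)) = finrank K (F d) :=
  Nat.sub_add_cancel (Submodule.finrank_mono (hF d.le_succ))

theorem sum_range_filtrationHilb_add_finrank {F : ℕ → Submodule K V} (hF : Antitone F) (n : ℕ) :
    ∑ d ∈ Finset.range n, filtrationHilb F d + finrank K (F n) = finrank K (F 0) := by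
  induction n with
  | zero => simp
  | succ n ih => rw [Finset.sum_range_succ, add_assoc, filtrationHilb_add_finrank_succ hF, ih]

theorem finrank_map_add_finrank_le {W : Type*} [AddCommGroup W] [Module K W] (g : V →ₗ[K] W)
    {S T : Submodule K V} (h : S ≤ T) :
    finrank K (T.map g) + finrank K S ≤ finrank K (S.map g) + finrank K T := by
  obtain ⟨C, hdisj, rfl⟩ := IsModularLattice.exists_disjoint_and_sup_eq h
  have hdim : finrank K ↥(S ⊔ C) = finrank K S + finrank K C := by
    rw [← Submodule.finrank_sup_add_finrank_inf_eq S C, hdisj.eq_bot, finrank_bot, add_zero]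
  calc finrank K ((S ⊔ C).map g) + finrank K S
      ≤ finrank K (S.map g) + finrank K (C.map g) + finrank K S := by
        rw [Submodule.map_sup]
        gcongr
        exact Submodule.finrank_add_le_finrank_add_finrank _ _
    _ ≤ finrank K (S.map g) + finrank K C + finrank K S := by
        gcongr
        exact Submodule.finrank_map_le g C
    _ = finrank K (S.map g) + finrank K ↥(S ⊔ C) := by rw [hdim]; ring

theorem finrank_map_pow_add_count_le {f : End K V} {F : ℕ → Submodule K V} (hF : Antitone F)
    (hf : ∀ d, (F d).map f ≤ F (d + 1)) (p : ℕ → Prop) [DecidablePred p] (n j : ℕ) :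
    finrank K ((F 0).map (f ^ (j + Nat.count p n))) ≤
      finrank K ((F n).map (f ^ j)) +
        ∑ d ∈ Finset.range n, if p d then 0 else filtrationHilb F d := by
  induction n generalizing j with
  | zero => rw [Nat.count_zero, add_zero, Finset.sum_range_zero, add_zero]
  | succ n ih =>
    rw [Nat.count_succ, Finset.sum_range_succ]
    by_cases hp : p n
    · have hstep : finrank K ((F n).map (f ^ (j + 1))) ≤ finrank K ((F (n + 1)).map (f ^ j)) := by
        rw [pow_succ, Module.End.mul_eq_comp, Submodule.map_comp]
        exact Submodule.finrank_mono (Submodule.map_mono (hf n))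
      rw [if_pos hp, if_pos hp, add_zero, ← add_assoc, add_right_comm]
      exact (ih (j + 1)).trans (Nat.add_le_add_right hstep _)
    · have hmap := finrank_map_add_finrank_le (f ^ j) (hF (Nat.le_add_right n 1))
      have hdim := filtrationHilb_add_finrank_succ hF n
      have hn := ih j
      rw [if_neg hp, if_neg hp, add_zero]
      omega

theorem finrank_range_pow_count_le {f : End K V} {F : ℕ → Submodule K V} (hF : Antitone F)
    (hf : ∀ d, (F d).map f ≤ F (d + 1)) {N : ℕ} (h0 : F 0 = ⊤) (hN : F N = ⊥)
    (p : ℕ → Prop) [DecidablePred p] :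
    finrank K (LinearMap.range (f ^ Nat.count p N)) ≤
      ∑ d ∈ Finset.range N, if p d then 0 else filtrationHilb F d := by
  have hle := finrank_map_pow_add_count_le hF hf p N 0
  rwa [h0, hN, Submodule.map_top, Submodule.map_bot, finrank_bot, zero_add, zero_add] at hle

end Filtration

section Partition

theorem sum_take_le_mul_add_sum_map_tsub (L : List ℕ) (i j : ℕ) :
    (L.take i).sum ≤ i * j + (L.map (· - j)).sum := by
  induction L generalizing i with
  | nil => simp
  | cons a L ih =>
    cases i with
    | zero => simp
    | succ i =>
      have htail := ih i
      simp only [List.take_succ_cons, List.sum_cons, List.map_cons, Nat.succ_mul]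
      omega

theorem sum_take_filter_pos {M : Type*} [AddCommMonoid M] [LinearOrder M] [CanonicallyOrderedAdd M]
    {L : List M} (hL : L.Pairwise (· ≥ ·)) (i : ℕ) :
    ((L.filter (0 < ·)).take i).sum = (L.take i).sum := by
  induction L generalizing i with
  | nil => simp
  | cons a L ih =>
    obtain ⟨hhead, htail⟩ := List.pairwise_cons.1 hL
    rcases eq_zero_or_pos a with rfl | ha
    · have hzero : ∀ x ∈ 0 :: L, x = 0 := by simpa using hhead
      rw [List.sum_eq_zero fun x hx => hzero x (List.mem_of_mem_take hx),
        List.sum_eq_zero fun x hx => hzero x (List.mem_of_mem_filter (List.mem_of_mem_take hx))]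
    · rw [List.filter_cons_of_pos (by simpa using ha)]
      cases i with
      | zero => simp
      | succ i => simp [ih htail i]

theorem sum_filter_pos {M : Type*} [AddCommMonoid M] [LinearOrder M] [CanonicallyOrderedAdd M]
    (s : Multiset M) : (s.filter (0 < ·)).sum = s.sum := by
  induction s using Multiset.induction_on with
  | empty => simp
  | cons a s ih => rcases eq_zero_or_pos a with rfl | ha <;> simp [*]

variable {H : ℕ → ℕ} {N : ℕ}

theorem ncard_superlevel_eq_count (hH : ∀ d, N ≤ d → H d = 0) (x : ℕ) :
    Set.ncard {d : ℕ | x + 1 ≤ H d} = Nat.count (x < H ·) N := by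
  rw [Nat.count_eq_card_filter_range, ← Set.ncard_coe_finset]
  congr 1
  ext d
  have := hH d
  simp only [Set.mem_ofPred_eq, Finset.coe_filter, Finset.mem_range]
  omega

theorem sum_range_count_lt (H : ℕ → ℕ) (N r : ℕ) :
    ∑ x ∈ Finset.range r, Nat.count (x < H ·) N = ∑ d ∈ Finset.range N, min (H d) r := by
  have hrow (d : ℕ) : (Finset.range r).filter (· < H d) = Finset.range (min (H d) r) := by
    ext x
    simp only [Finset.mem_filter, Finset.mem_range]
    omega
  have hdouble := Finset.sum_card_bipartiteAbove_eq_sum_card_bipartiteBelow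
    (s := Finset.range r) (t := Finset.range N) (fun x d => x < H d)
  simpa only [Finset.bipartiteAbove, Finset.bipartiteBelow, hrow, Finset.card_range,
    ← Nat.count_eq_card_filter_range] using hdouble

theorem sum_range_min_eq (H : ℕ → ℕ) (N i : ℕ) :
    ∑ d ∈ Finset.range N, min (H d) i =
      i * Nat.count (i < H ·) N + ∑ d ∈ Finset.range N, if i < H d then 0 else H d := by
  induction N with
  | zero => simp
  | succ N ih =>
    rw [Finset.sum_range_succ, Finset.sum_range_succ, Nat.count_succ, ih]
    split_ifs with h
    · rw [min_eq_right h.le]; ring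
    · rw [min_eq_left (not_lt.1 h)]; ring

theorem conjHilb_eq_filter_map_count (hH : ∀ d, N ≤ d → H d = 0) (n : ℕ) :
    conjHilb H n = ((Multiset.range n).map fun x => Nat.count (x < H ·) N).filter (0 < ·) := by
  simp only [conjHilb, ncard_superlevel_eq_count hH]

theorem conjHilb_sum {n : ℕ} (hH : ∀ d, N ≤ d → H d = 0) (hn : ∀ d, H d ≤ n) :
    (conjHilb H n).sum = ∑ d ∈ Finset.range N, H d := by
  rw [conjHilb_eq_filter_map_count hH, sum_filter_pos]
  exact (sum_range_count_lt H N n).trans (Finset.sum_congr rfl fun d _ => min_eq_left (hn d))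

theorem pairwise_ge_map_range_count_lt (H : ℕ → ℕ) (N n : ℕ) :
    ((List.range n).map fun x => Nat.count (x < H ·) N).Pairwise (· ≥ ·) :=
  List.pairwise_map.2 <| List.pairwise_lt_range.imp fun hxy =>
    Nat.count_mono_left fun _ _ h => hxy.trans h

theorem sort_conjHilb (hH : ∀ d, N ≤ d → H d = 0) (n : ℕ) :
    (conjHilb H n).sort (· ≥ ·) =
      ((List.range n).map fun x => Nat.count (x < H ·) N).filter (0 < ·) := by
  refine List.Perm.eq_of_pairwise' (Multiset.pairwise_sort _ _)
    ((pairwise_ge_map_range_count_lt H N n).filter _) ?_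
  rw [← Multiset.coe_eq_coe, Multiset.sort_eq, conjHilb_eq_filter_map_count hH, Multiset.range,
    Multiset.map_coe, Multiset.filter_coe]

theorem sum_take_sort_conjHilb {n : ℕ} (hH : ∀ d, N ≤ d → H d = 0) (hn : ∀ d, H d ≤ n) (i : ℕ) :
    (((conjHilb H n).sort (· ≥ ·)).take i).sum = ∑ d ∈ Finset.range N, min (H d) i := by
  rw [sort_conjHilb hH, sum_take_filter_pos (pairwise_ge_map_range_count_lt H N n), ← List.map_take,
    List.take_range]
  refine (sum_range_count_lt H N (min i n)).trans (Finset.sum_congr rfl fun d _ => ?_)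
  rw [min_comm i n, ← min_assoc, min_eq_left (hn d)]

end Partition

section JordanType

variable {k V : Type*} [Field k] [AddCommGroup V] [Module k V] {f : End k V} {P : Multiset ℕ}

theorem IsJordanTypeOf.sum_eq_finrank (hP : IsJordanTypeOf f P) : P.sum = finrank k V := by
  have hrank := hP.2 0
  rw [pow_zero, Module.End.one_eq_id, LinearMap.range_id, finrank_top] at hrank
  simpa using hrank.symm

theorem IsJordanTypeOf.sum_take_sort_le (hP : IsJordanTypeOf f P) (i j : ℕ) :
    ((P.sort (· ≥ ·)).take i).sum ≤ i * j + finrank k (LinearMap.range (f ^ j)) := by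
  have hsum : ((P.sort (· ≥ ·)).map (· - j)).sum = (P.map (· - j)).sum := by
    rw [← Multiset.sum_coe, ← Multiset.map_coe, Multiset.sort_eq]
  rw [hP.2 j, ← hsum]
  exact sum_take_le_mul_add_sum_map_tsub _ i j

theorem IsJordanTypeOf.domLE_conjHilb_filtrationHilb [FiniteDimensional k V]
    (hP : IsJordanTypeOf f P) {F : ℕ → Submodule k V} (hF : Antitone F)
    (hf : ∀ d, (F d).map f ≤ F (d + 1)) {N : ℕ} (h0 : F 0 = ⊤) (hN : F N = ⊥) :
    DomLE P (conjHilb (filtrationHilb F) (finrank k V)) := by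
  have hzero : ∀ d, N ≤ d → filtrationHilb F d = 0 := fun d => filtrationHilb_eq_zero hF hN
  refine ⟨?_, fun i => ?_⟩
  · rw [hP.sum_eq_finrank, conjHilb_sum hzero (filtrationHilb_le_finrank F), ← finrank_top k V,
      ← h0, ← sum_range_filtrationHilb_add_finrank hF N, hN, finrank_bot, add_zero]
  · rw [sum_take_sort_conjHilb hzero (filtrationHilb_le_finrank F), sum_range_min_eq]
    exact (hP.sum_take_sort_le i _).trans
      (Nat.add_le_add_left (finrank_range_pow_count_le hF hf h0 hN (i < filtrationHilb F ·)) _)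

end JordanType

theorem isNilpotent_of_mem_graded_succ {R A : Type*} [CommSemiring R] [Semiring A] [Algebra R A]
    [IsNoetherian R A] (𝒜 : ℕ → Submodule R A) [GradedAlgebra 𝒜] {i : ℕ} {x : A}
    (hx : x ∈ 𝒜 (i + 1)) : IsNilpotent x := by
  have hfin : {d | 𝒜 d ≠ ⊥}.Finite := WellFoundedGT.finite_ne_bot_of_iSupIndep
    (DirectSum.Decomposition.isInternal 𝒜).submodule_iSupIndep
  obtain ⟨M, hM⟩ := hfin.bddAbove
  have hbot : 𝒜 ((M + 1) * (i + 1)) = ⊥ := by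
    by_contra h
    nlinarith [hM h]
  exact ⟨M + 1, by simpa [hbot] using SetLike.pow_mem_graded (M + 1) hx⟩

theorem gradedMaxIdeal_isNilpotent {k A : Type*} [Field k] [CommRing A] [Algebra k A]
    (𝒜 : ℕ → Submodule k A) [GradedAlgebra 𝒜] [FiniteDimensional k A] :
    IsNilpotent (gradedMaxIdeal 𝒜) := by
  have : IsNoetherianRing A := isNoetherian_of_tower k inferInstance
  rw [Ideal.FG.isNilpotent_iff_le_nilradical (IsNoetherian.noetherian _), gradedMaxIdeal,
    Ideal.span_le]
  rintro x ⟨i, hx⟩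
  exact isNilpotent_of_mem_graded_succ 𝒜 hx

theorem jordan_type_le_conj_hilbert_of_assoc_graded_general
    {k A : Type*} [Field k] [CommRing A] [Algebra k A] [FiniteDimensional k A]
    {m : Ideal A} (hm : IsNilpotent m) {ℓ : A} (hℓ : ℓ ∈ m)
    {P : Multiset ℕ} (hP : IsJordanTypeOf (LinearMap.mulLeft k ℓ) P) :
    DomLE P (conjHilb (grHilb k m) (finrank k A)) := by
  obtain ⟨N, hN⟩ := hm
  let F (d : ℕ) : Submodule k A := (m ^ d).restrictScalars k
  have hF : Antitone F := fun _ _ hij _ hx => Ideal.pow_le_pow_right hij hx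
  have hshift (d : ℕ) : (F d).map (LinearMap.mulLeft k ℓ) ≤ F (d + 1) := by
    rintro _ ⟨x, hx, rfl⟩
    have hmul : ℓ * x ∈ m * m ^ d := Ideal.mul_mem_mul hℓ hx
    rwa [← pow_succ'] at hmul
  have h0 : F 0 = ⊤ := by simp [F, Ideal.one_eq_top]
  have hbot : F N = ⊥ := by simp [F, hN]
  exact hP.domLE_conjHilb_filtrationHilb hF hshift h0 hbot

/-- Let `A` be a graded Artinian algebra over a field `k` and let `ℓ ∈ m_A` be
any (possibly non-homogeneous) element.  Then `P_ℓ ≤ H(Gr_{m_A}(A))^∨` in the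
dominance order, where `Gr_{m_A}(A)` is the associated graded algebra of `A`
with respect to its maximal graded ideal. -/
theorem jordan_type_le_conj_hilbert_of_assoc_graded
    {k A : Type*} [Field k] [CommRing A] [Algebra k A]
    (𝒜 : ℕ → Submodule k A) [GradedAlgebra 𝒜] [FiniteDimensional k A]
    (hconn : 𝒜 0 = Submodule.span k {(1 : A)})
    (ℓ : A) (hℓ : ℓ ∈ gradedMaxIdeal 𝒜)
    (P : Multiset ℕ) (hP : IsJordanTypeOf (LinearMap.mulLeft k ℓ) P) :
    DomLE P (conjHilb (grHilb k (gradedMaxIdeal 𝒜)) (Module.finrank k A)) :=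
  jordan_type_le_conj_hilbert_of_assoc_graded_general (gradedMaxIdeal_isNilpotent 𝒜) hℓ hP
end

section
/- (Clebsch–Gordan) Let m ≤ n be positive integers, let k be a field with char k = 0 or char k > m + n − 1, and let R(m,n) = k[x,y]/(x^m, y^n) with the standard grading. Then H(R(m,n)) = (1, 2, …, m−1, m, m, …, m, m−1, …, 2, 1) (with m occurring n − m + 1 times), and the linear form ℓ = x + y has Jordan type P_ℓ = (n+m−1, n+m−3, …, n−m+1) = H(R(m,n))^∨; in particular ℓ is a strong Lefschetz element of R(m,n). -/
/-- A linear form `ℓ` is strong Lefschetz for the graded algebra `A` with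
grading `𝒜` if `ℓ ∈ 𝒜 1` and all multiplication maps `×ℓ^j : 𝒜 i → 𝒜 (i+j)`
have maximal rank. -/
def IsSL {k A : Type*} [Field k] [CommRing A] [Algebra k A]
    (𝒜 : ℕ → Submodule k A) (ℓ : A) : Prop :=
  ℓ ∈ 𝒜 1 ∧ ∀ i j : ℕ,
    Module.finrank k ((𝒜 i).map (LinearMap.mulLeft k (ℓ ^ j))) =
      min (Module.finrank k (𝒜 i)) (Module.finrank k (𝒜 (i + j)))

open MvPolynomial

section Graded

theorem finrank_span_basis_image {ι k V : Type*} [Field k] [AddCommGroup V] [Module k V]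
    (b : Module.Basis ι k V) (s : Set ι) :
    Module.finrank k (Submodule.span k (b '' s)) = s.ncard := by
  rw [Set.image_eq_range,
    Module.finrank_eq_nat_card_basis (Module.Basis.span (b.linearIndependent.linearIndepOn s)),
    Nat.card_coe_set_eq]

theorem isInternal_span_basis_image_fiber {ι κ k V : Type*} [DecidableEq κ] [Ring k] [Nontrivial k]
    [AddCommGroup V] [Module k V] (b : Module.Basis ι k V) (deg : ι → κ) :
    DirectSum.IsInternal fun d => Submodule.span k (b '' (deg ⁻¹' {d})) := by
  refine DirectSum.isInternal_submodule_of_iSupIndep_of_iSup_eq_top (fun d => ?_) ?_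
  · refine (b.linearIndependent.disjoint_span_image (t := deg ⁻¹' {d}ᶜ) ?_).mono_right ?_
    · exact disjoint_compl_right.preimage deg
    · exact iSup₂_le fun e he =>
        Submodule.span_mono (Set.image_mono (Set.preimage_mono (Set.singleton_subset_iff.2 he)))
  · rw [← Submodule.span_iUnion, ← Set.image_iUnion, ← Set.preimage_iUnion,
      Set.iUnion_of_singleton, Set.preimage_univ, Set.image_univ, b.span_eq]

theorem finrank_biSup_of_iSupIndep {ι k V : Type*} [Field k] [AddCommGroup V] [Module k V]
    [FiniteDimensional k V] {p : ι → Submodule k V} (hp : iSupIndep p) (s : Finset ι) :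
    Module.finrank k (⨆ i ∈ s, p i : Submodule k V) = ∑ i ∈ s, Module.finrank k (p i) := by
  classical
  induction s using Finset.induction_on with
  | empty => simp
  | insert a s ha ih =>
    have hd : Disjoint (p a) (⨆ i ∈ s, p i) := hp.disjoint_biSup (y := (s : Set ι)) ha
    rw [Finset.iSup_insert, Finset.sum_insert ha, ← ih,
      ← Submodule.finrank_sup_add_finrank_inf_eq, hd.eq_bot, finrank_bot, add_zero]

theorem finrank_iSup_of_iSupIndep {ι k V : Type*} [Field k] [AddCommGroup V] [Module k V]
    [FiniteDimensional k V] {p : ι → Submodule k V} (hp : iSupIndep p) {s : Finset ι}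
    (hs : ∀ i ∉ s, p i = ⊥) :
    Module.finrank k (⨆ i, p i : Submodule k V) = ∑ i ∈ s, Module.finrank k (p i) := by
  have hsup : ⨆ i, p i = ⨆ i ∈ s, p i :=
    le_antisymm (iSup_le fun i => by
      by_cases hi : i ∈ s
      · exact le_biSup p hi
      · simp [hs i hi]) (iSup₂_le_iSup _ p)
  rw [hsup, finrank_biSup_of_iSupIndep hp]

end Graded

section Conjugate

theorem card_filter_add_mem {s : Finset ℕ} (hs : (s : Set ℕ).OrdConnected) (j : ℕ) :
    {i ∈ s | i + j ∈ s}.card = s.card - j := by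
  obtain rfl | hne := s.eq_empty_or_nonempty
  · simp
  obtain ⟨a, b, rfl⟩ : ∃ a b, s = Finset.Icc a b := by
    refine ⟨s.min' hne, s.max' hne, subset_antisymm (fun i hi => ?_) fun i hi => ?_⟩
    · exact Finset.mem_Icc.2 ⟨s.min'_le i hi, s.le_max' i hi⟩
    · exact hs.out (s.min'_mem hne) (s.max'_mem hne) (Finset.mem_Icc.1 hi)
  have hfilter : {i ∈ Finset.Icc a b | i + j ∈ Finset.Icc a b} = Finset.Ico a (b + 1 - j) := by
    ext i
    simp only [Finset.mem_filter, Finset.mem_Icc, Finset.mem_Ico]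
    omega
  rw [hfilter, Nat.card_Ico, Nat.card_Icc]
  omega

theorem pos_of_mem_conjHilb {H : ℕ → ℕ} {N p : ℕ} (hp : p ∈ conjHilb H N) : 0 < p :=
  (Multiset.mem_filter.1 hp).2

theorem sum_map_sub_conjHilb (H : ℕ → ℕ) (N j : ℕ) :
    ((conjHilb H N).map (· - j)).sum =
      ∑ t ∈ Finset.range N, ({d | t + 1 ≤ H d}.ncard - j) := by
  rw [conjHilb]
  induction N with
  | zero => simp
  | succ N ih =>
    rw [Multiset.range_succ, Multiset.map_cons, Finset.sum_range_succ_comm, ← ih]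
    obtain h0 | hpos := Nat.eq_zero_or_pos {d | N + 1 ≤ H d}.ncard
    · rw [Multiset.filter_cons_of_neg _ (by omega), h0, Nat.zero_sub, zero_add]
    · rw [Multiset.filter_cons_of_pos (p := (0 < ·)) _ hpos, Multiset.map_cons, Multiset.sum_cons]

/-- Both sides count the pairs `(i, t)` with `t < H i` and `t < H (i + j)`: by unimodality each
level set `{d | t < H d}` is an interval, which meets its translate by `j` in `ncard - j` points. -/
theorem sum_min_add_eq_sum_map_sub_conjHilb {H : ℕ → ℕ} {s : Finset ℕ} {N : ℕ}
    (hs : ∀ i ∉ s, H i = 0) (hN : ∀ i, H i ≤ N)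
    (hH : ∀ ⦃a b c⦄, a ≤ b → b ≤ c → min (H a) (H c) ≤ H b) (j : ℕ) :
    ∑ i ∈ s, min (H i) (H (i + j)) = ((conjHilb H N).map (· - j)).sum := by
  have hlevel (t : ℕ) : {i ∈ s | t < H i ∧ t < H (i + j)}.card = {d | t + 1 ≤ H d}.ncard - j := by
    have hcoe : {d | t + 1 ≤ H d} = ({i ∈ s | t < H i} : Finset ℕ) := by
      ext i
      have := hs i
      simp only [Finset.coe_filter, Set.mem_ofPred_eq]
      by_cases hi : i ∈ s <;> grind
    have hconn : (({i ∈ s | t < H i} : Finset ℕ) : Set ℕ).OrdConnected := by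
      rw [← hcoe]
      exact ⟨fun a ha c hc b hb => (le_min ha hc).trans (hH hb.1 hb.2)⟩
    rw [hcoe, Set.ncard_coe_finset, ← card_filter_add_mem hconn j, Finset.filter_filter]
    congr 1
    ext i
    have := hs (i + j)
    grind
  calc ∑ i ∈ s, min (H i) (H (i + j))
      = ∑ i ∈ s, {t ∈ Finset.range N | t < H i ∧ t < H (i + j)}.card := by
        refine Finset.sum_congr rfl fun i _ => ?_
        rw [← Finset.card_range (min (H i) (H (i + j)))]
        congr 1
        ext t
        have := hN i
        simp only [Finset.mem_range, Finset.mem_filter]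
        omega
    _ = ∑ t ∈ Finset.range N, {i ∈ s | t < H i ∧ t < H (i + j)}.card :=
        Finset.sum_card_bipartiteAbove_eq_sum_card_bipartiteBelow _
    _ = ((conjHilb H N).map (· - j)).sum := by
        simp only [hlevel, sum_map_sub_conjHilb]

theorem conjHilb_eq_map_range {H : ℕ → ℕ} {m N : ℕ} (hmN : m ≤ N)
    (hpos : ∀ t < m, 0 < {d | t + 1 ≤ H d}.ncard) (hH : ∀ d, H d ≤ m) :
    conjHilb H N = (Multiset.range m).map fun t => {d | t + 1 ≤ H d}.ncard := by
  obtain ⟨r, rfl⟩ := Nat.exists_eq_add_of_le hmN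
  rw [conjHilb, Multiset.range_add, Multiset.map_add, Multiset.filter_add,
    Multiset.filter_eq_self.2, Multiset.filter_eq_nil.2, add_zero]
  · simp only [Multiset.mem_map]
    rintro _ ⟨_, ⟨t, _, rfl⟩, rfl⟩
    have hempty : {d | m + t + 1 ≤ H d} = ∅ :=
      Set.eq_empty_of_forall_notMem fun d (hd : m + t + 1 ≤ H d) => by have := hH d; omega
    rw [hempty, Set.ncard_empty]
    exact lt_irrefl 0
  · simp only [Multiset.mem_map, Multiset.mem_range]
    rintro _ ⟨t, ht, rfl⟩
    exact hpos t ht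

end Conjugate

section StrongLefschetz

variable {k A : Type*} [Field k] [CommRing A] [Algebra k A] {𝒜 : ℕ → Submodule k A} {ℓ : A}

theorem map_mulLeft_pow_le [SetLike.GradedMonoid 𝒜] (hℓ : ℓ ∈ 𝒜 1) (i j : ℕ) :
    (𝒜 i).map (LinearMap.mulLeft k (ℓ ^ j)) ≤ 𝒜 (i + j) := by
  rintro _ ⟨a, ha, rfl⟩
  have := SetLike.mul_mem_graded (SetLike.pow_mem_graded j hℓ) ha
  rwa [smul_eq_mul, mul_one, add_comm] at this

theorem map_mulLeft_pow_add (p : Submodule k A) (i j : ℕ) :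
    p.map (LinearMap.mulLeft k (ℓ ^ (i + j))) =
      (p.map (LinearMap.mulLeft k (ℓ ^ i))).map (LinearMap.mulLeft k (ℓ ^ j)) := by
  rw [← Submodule.map_comp, pow_add, mul_comm, LinearMap.mulLeft_mul]

theorem finrank_map_mulLeft_of_forall_eq_zero {p : Submodule k A} {a : A}
    (h : ∀ x ∈ p, a * x = 0 → x = 0) :
    Module.finrank k (p.map (LinearMap.mulLeft k a)) = Module.finrank k p := by
  rw [← LinearMap.range_domRestrict]
  refine LinearMap.finrank_range_of_inj ((injective_iff_map_eq_zero _).2 fun x hx => ?_)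
  exact Subtype.ext (h x x.2 hx)

theorem isSL_of_injective [SetLike.GradedMonoid 𝒜] [∀ i, FiniteDimensional k (𝒜 i)] {c : ℕ}
    (hℓ : ℓ ∈ 𝒜 1) (hsymm : ∀ i j, i + j = c → Module.finrank k (𝒜 i) = Module.finrank k (𝒜 j))
    (hbot : ∀ i, c < i → Module.finrank k (𝒜 i) = 0)
    (hinj : ∀ i j, 2 * i + j = c → ∀ a ∈ 𝒜 i, ℓ ^ j * a = 0 → a = 0) : IsSL 𝒜 ℓ := by
  have hrank : ∀ i j, 2 * i + j ≤ c →
      Module.finrank k ((𝒜 i).map (LinearMap.mulLeft k (ℓ ^ j))) = Module.finrank k (𝒜 i) := by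
    intro i j hij
    obtain ⟨d, rfl⟩ := Nat.exists_eq_add_of_le hij
    refine finrank_map_mulLeft_of_forall_eq_zero fun a ha h0 =>
      hinj i (j + d) (add_assoc _ _ _).symm a ha ?_
    rw [add_comm, pow_add, mul_assoc, h0, mul_zero]
  refine ⟨hℓ, fun i j => le_antisymm (le_min (Submodule.finrank_map_le _ _)
    (Submodule.finrank_mono (map_mulLeft_pow_le hℓ i j))) ?_⟩
  obtain hij | hij := le_or_gt (2 * i + j) c
  · exact (min_le_left _ _).trans (hrank i j hij).ge
  obtain hc | hc := lt_or_ge c (i + j)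
  · simp [hbot _ hc]
  -- Past the middle, `ℓ ^ j * 𝒜 i` contains `ℓ ^ (i + j - i') * 𝒜 i'`, where `i' = c - (i + j)`.
  obtain ⟨i', hi'⟩ := Nat.exists_eq_add_of_le hc
  obtain ⟨d, rfl⟩ : ∃ d, i = i' + d := Nat.exists_eq_add_of_le (by omega)
  calc min (Module.finrank k (𝒜 (i' + d))) (Module.finrank k (𝒜 (i' + d + j)))
      ≤ Module.finrank k (𝒜 i') := (min_le_right _ _).trans (hsymm _ _ hi'.symm).le
    _ = Module.finrank k ((𝒜 i').map (LinearMap.mulLeft k (ℓ ^ (d + j)))) :=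
        (hrank i' (d + j) (by omega)).symm
    _ ≤ Module.finrank k ((𝒜 (i' + d)).map (LinearMap.mulLeft k (ℓ ^ j))) := by
        rw [map_mulLeft_pow_add]
        exact Submodule.finrank_mono (Submodule.map_mono (map_mulLeft_pow_le hℓ i' d))

theorem IsSL.min_finrank_le_finrank [SetLike.GradedMonoid 𝒜] [∀ i, FiniteDimensional k (𝒜 i)]
    (h : IsSL 𝒜 ℓ) {a b c : ℕ} (hab : a ≤ b) (hbc : b ≤ c) :
    min (Module.finrank k (𝒜 a)) (Module.finrank k (𝒜 c)) ≤ Module.finrank k (𝒜 b) := by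
  obtain ⟨i, rfl⟩ := Nat.exists_eq_add_of_le hab
  obtain ⟨j, rfl⟩ := Nat.exists_eq_add_of_le hbc
  rw [add_assoc, ← h.2, map_mulLeft_pow_add]
  exact (Submodule.finrank_map_le _ _).trans
    (Submodule.finrank_mono (map_mulLeft_pow_le h.1 a i))

theorem finrank_range_mulLeft_pow [SetLike.GradedMonoid 𝒜] [FiniteDimensional k A]
    (h𝒜 : DirectSum.IsInternal 𝒜) (hℓ : ℓ ∈ 𝒜 1) {s : Finset ℕ} (hs : ∀ i ∉ s, 𝒜 i = ⊥) (j : ℕ) :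
    Module.finrank k (LinearMap.range (LinearMap.mulLeft k (ℓ ^ j))) =
      ∑ i ∈ s, Module.finrank k ((𝒜 i).map (LinearMap.mulLeft k (ℓ ^ j))) := by
  have hind : iSupIndep fun i => (𝒜 i).map (LinearMap.mulLeft k (ℓ ^ j)) :=
    (h𝒜.submodule_iSupIndep.comp (add_left_injective j)).mono fun i => map_mulLeft_pow_le hℓ i j
  rw [LinearMap.range_eq_map, ← h𝒜.submodule_iSup_eq_top, Submodule.map_iSup]
  exact finrank_iSup_of_iSupIndep hind fun i hi => by rw [hs i hi, Submodule.map_bot]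

theorem IsSL.isJordanTypeOf_conjHilb [SetLike.GradedMonoid 𝒜] [FiniteDimensional k A]
    (h𝒜 : DirectSum.IsInternal 𝒜) (h : IsSL 𝒜 ℓ) :
    IsJordanTypeOf (LinearMap.mulLeft k ℓ)
      (conjHilb (fun i => Module.finrank k (𝒜 i)) (Module.finrank k A)) := by
  refine ⟨fun p => pos_of_mem_conjHilb, fun j => ?_⟩
  have hfin := WellFoundedGT.finite_ne_bot_of_iSupIndep h𝒜.submodule_iSupIndep
  have hs : ∀ i ∉ hfin.toFinset, 𝒜 i = ⊥ := fun i hi => by simpa using hi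
  rw [LinearMap.pow_mulLeft, finrank_range_mulLeft_pow h𝒜 h.1 hs,
    ← sum_min_add_eq_sum_map_sub_conjHilb (fun i hi => by rw [hs i hi, finrank_bot])
      (fun i => Submodule.finrank_le (𝒜 i)) fun _ _ _ => h.min_finrank_le_finrank]
  exact Finset.sum_congr rfl fun i _ => h.2 i j

end StrongLefschetz

section Wronskian

open scoped Polynomial
open Polynomial (wronskian derivative natDegree_derivative_le coeff_derivative
  coeff_mul_add_eq_of_natDegree_le natDegree_wronskian_lt_add)

variable {R : Type*} [CommRing R]

theorem coeff_mul_derivative_natDegree (a b : R[X]) :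
    (a * derivative b).coeff (a.natDegree + b.natDegree - 1) =
      b.natDegree * (a.leadingCoeff * b.leadingCoeff) := by
  obtain hb | hb := Nat.eq_zero_or_pos b.natDegree
  · simp [Polynomial.derivative_of_natDegree_zero hb, hb]
  · obtain ⟨d, hd⟩ := Nat.exists_eq_add_one.2 hb
    have hlead : (derivative b).coeff (b.natDegree - 1) = b.leadingCoeff * b.natDegree := by
      simp [coeff_derivative, Polynomial.leadingCoeff, hd]
    rw [Nat.add_sub_assoc hb,
      coeff_mul_add_eq_of_natDegree_le le_rfl (natDegree_derivative_le b), hlead,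
      Polynomial.coeff_natDegree]
    ring

theorem coeff_wronskian_natDegree (a b : R[X]) :
    (wronskian a b).coeff (a.natDegree + b.natDegree - 1) =
      (b.natDegree - a.natDegree) * (a.leadingCoeff * b.leadingCoeff) := by
  rw [wronskian, Polynomial.coeff_sub, coeff_mul_derivative_natDegree, mul_comm (derivative a),
    add_comm a.natDegree, coeff_mul_derivative_natDegree]
  ring

theorem wronskian_ne_zero [NoZeroDivisors R] {a b : R[X]} (ha : a ≠ 0) (hb : b ≠ 0)
    (hdeg : (a.natDegree : R) ≠ b.natDegree) : wronskian a b ≠ 0 := fun hW => by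
  refine mul_ne_zero (sub_ne_zero.2 hdeg.symm)
    (mul_ne_zero (Polynomial.leadingCoeff_ne_zero.2 ha) (Polynomial.leadingCoeff_ne_zero.2 hb)) ?_
  rw [← coeff_wronskian_natDegree, hW, Polynomial.coeff_zero]

theorem pow_sub_one_dvd_wronskian_left {p a : R[X]} {n : ℕ} (h : p ^ n ∣ a) (b : R[X]) :
    p ^ (n - 1) ∣ wronskian a b :=
  dvd_sub (((pow_dvd_pow p n.pred_le).trans h).mul_right _)
    ((Polynomial.pow_sub_one_dvd_derivative_of_pow_dvd h).mul_right _)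

theorem pow_sub_one_dvd_wronskian_right {p b : R[X]} {n : ℕ} (a : R[X]) (h : p ^ n ∣ b) :
    p ^ (n - 1) ∣ wronskian a b := by
  rw [← Polynomial.wronskian_neg_eq, dvd_neg]
  exact pow_sub_one_dvd_wronskian_left h a

theorem natDegree_mul_add_lt_of_pow_dvd_add_of_pow_dvd [IsDomain R] {a b p q : R[X]} {r s : ℕ}
    (hpq : IsCoprime p q) (ha : a ≠ 0) (hb : b ≠ 0) (hdeg : (a.natDegree : R) ≠ b.natDegree)
    (hp : p ^ r ∣ a + b) (hq : q ^ s ∣ b) :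
    (r - 1) * p.natDegree + (s - 1) * q.natDegree < a.natDegree + b.natDegree := by
  -- `W(a, b) = W(a + b, b)`, so both `p ^ (r - 1)` and `q ^ (s - 1)` divide it.
  have hW : wronskian a b ≠ 0 := wronskian_ne_zero ha hb hdeg
  have hpW : p ^ (r - 1) ∣ wronskian a b := by
    have := pow_sub_one_dvd_wronskian_left hp b
    rwa [Polynomial.wronskian_add_left, Polynomial.wronskian_self_eq_zero, add_zero] at this
  have hdvd : p ^ (r - 1) * q ^ (s - 1) ∣ wronskian a b :=
    hpq.pow.mul_dvd hpW (pow_sub_one_dvd_wronskian_right a hq)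
  calc (r - 1) * p.natDegree + (s - 1) * q.natDegree
      = (p ^ (r - 1) * q ^ (s - 1)).natDegree := by
        have h0 := ne_zero_of_dvd_ne_zero hW hdvd
        rw [Polynomial.natDegree_mul (left_ne_zero_of_mul h0) (right_ne_zero_of_mul h0),
          Polynomial.natDegree_pow, Polynomial.natDegree_pow]
    _ ≤ (wronskian a b).natDegree := Polynomial.natDegree_le_of_dvd hdvd hW
    _ < a.natDegree + b.natDegree := natDegree_wronskian_lt_add hW

theorem exists_eq_add_X_pow_mul_of_coeff_eq_zero [Nontrivial R] {f : R[X]} {d m : ℕ}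
    (hf : ∀ t < m, d ≤ t → f.coeff t = 0) :
    ∃ a b : R[X], f = a + Polynomial.X ^ m * b ∧ a.degree < (min d m : ℕ) := by
  have hdiv := Polynomial.modByMonic_add_div f (Polynomial.X ^ m)
  refine ⟨f %ₘ Polynomial.X ^ m, f /ₘ Polynomial.X ^ m, hdiv.symm,
    (Polynomial.degree_lt_iff_coeff_zero _ _).2 fun t ht => ?_⟩
  obtain htm | htm := lt_or_ge t m
  · have hcoeff : f.coeff t = (f %ₘ Polynomial.X ^ m).coeff t := by
      conv_lhs => rw [← hdiv]
      rw [Polynomial.coeff_add, Polynomial.coeff_X_pow_mul', if_neg htm.not_ge, add_zero]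
    rw [← hcoeff, hf t htm (by omega)]
  · refine Polynomial.coeff_eq_zero_of_degree_lt (lt_of_lt_of_le ?_ (Nat.cast_le.2 htm))
    simpa using Polynomial.degree_modByMonic_lt f (Polynomial.monic_X_pow (R := R) m)

/-- A form of degree `D` lies in `(x ^ m, y ^ n)` iff its coefficients at `x ^ t * y ^ (D - t)` with
`t < m` and `D < n + t` vanish. Here `y = 1`, and `p`, `(X + 1) ^ j * p` are the dehomogenizations
of forms of degrees `i`, `i + j`. -/
theorem coeff_eq_zero_of_coeff_X_add_one_pow_mul_eq_zero {k : Type*} [Field k] {m n i j : ℕ}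
    (hchar : ∀ t : ℕ, 0 < t → t ≤ i + j → (t : k) ≠ 0) (hij : 2 * i + j + 2 ≤ m + n)
    {p : k[X]} (hp : p.natDegree ≤ i)
    (h : ∀ t < m, i + j < n + t → ((Polynomial.X + 1) ^ j * p).coeff t = 0) :
    ∀ t < m, i < n + t → p.coeff t = 0 := by
  have hcop : IsCoprime (Polynomial.X + 1 : k[X]) Polynomial.X := ⟨1, -1, by ring⟩
  have hmonic : (Polynomial.X + 1 : k[X]).Monic := Polynomial.monic_X_add_C 1
  have hdeg : (Polynomial.X + 1 : k[X]).natDegree = 1 := Polynomial.natDegree_X_add_C 1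
  have hdegF : ((Polynomial.X + 1) ^ j * p).natDegree ≤ i + j := by
    grw [Polynomial.natDegree_mul_le, Polynomial.natDegree_pow_le, hdeg, hp, mul_one, add_comm]
  obtain ⟨a, b, hab, ha⟩ :=
    exists_eq_add_X_pow_mul_of_coeff_eq_zero (d := i + j + 1 - n) fun t ht hd => h t ht (by omega)
  obtain rfl | ha0 := eq_or_ne a 0
  · rw [zero_add] at hab
    have hdvd : Polynomial.X ^ m ∣ p := hcop.symm.pow.dvd_of_dvd_mul_left ⟨b, hab⟩
    exact fun t ht _ => Polynomial.X_pow_dvd_iff.1 hdvd t ht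
  have hadeg : a.natDegree < min (i + j + 1 - n) m :=
    (Polynomial.natDegree_lt_iff_degree_lt ha0).2 ha
  obtain rfl | hb0 := eq_or_ne b 0
  · rw [mul_zero, add_zero] at hab
    have hp0 : p ≠ 0 := by rintro rfl; exact ha0 (by rw [← hab, mul_zero])
    have hpdeg : a.natDegree = j + p.natDegree := by
      rw [← hab, (hmonic.pow j).natDegree_mul' hp0, hmonic.natDegree_pow, hdeg, mul_one]
    exact fun t _ ht => Polynomial.coeff_eq_zero_of_natDegree_lt (by omega)
  have hbX0 : Polynomial.X ^ m * b ≠ 0 := mul_ne_zero (pow_ne_zero _ Polynomial.X_ne_zero) hb0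
  have hble : m ≤ (Polynomial.X ^ m * b).natDegree := by
    simp [Polynomial.natDegree_X_pow_mul m hb0]
  have hbdeg : (Polynomial.X ^ m * b).natDegree ≤ i + j := by
    rw [← sub_eq_of_eq_add' hab]
    exact (Polynomial.natDegree_sub_le _ _).trans (max_le hdegF (by omega))
  have hne : (a.natDegree : k) ≠ (Polynomial.X ^ m * b).natDegree := by
    rw [ne_comm, ← sub_ne_zero, ← Nat.cast_sub (by omega)]
    exact hchar _ (by omega) (by omega)
  have hlt := natDegree_mul_add_lt_of_pow_dvd_add_of_pow_dvd hcop ha0 hbX0 hne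
    (hab ▸ dvd_mul_right _ p) (dvd_mul_right _ b)
  rw [hdeg, Polynomial.natDegree_X] at hlt
  omega

end Wronskian

section MonomialIdeal

variable {σ R : Type*} [CommRing R]

/-- The degree-`d` piece of a quotient of a polynomial ring, as the image of the forms of degree
`d`. These pieces form a grading only when `I` is homogeneous. -/
noncomputable def quotientPiece (I : Ideal (MvPolynomial σ R)) (d : ℕ) :
    Submodule R (MvPolynomial σ R ⧸ I) :=
  (homogeneousSubmodule σ R d).map (Ideal.Quotient.mkₐ R I).toLinearMap

theorem span_mk_image_isHomogeneous (I : Ideal (MvPolynomial σ R)) (d : ℕ) :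
    Submodule.span R (Ideal.Quotient.mk I '' {f | f.IsHomogeneous d}) = quotientPiece I d :=
  (Submodule.span_image (Ideal.Quotient.mkₐ R I).toLinearMap).trans
    (congrArg _ (Submodule.span_eq (homogeneousSubmodule σ R d)))

instance quotientPiece.gradedMonoid (I : Ideal (MvPolynomial σ R)) :
    SetLike.GradedMonoid (quotientPiece I) where
  one_mem := ⟨1, isHomogeneous_one σ R, map_one (Ideal.Quotient.mk I)⟩
  mul_mem := by
    rintro i j _ _ ⟨f, hf, rfl⟩ ⟨g, hg, rfl⟩
    exact ⟨f * g, hf.mul hg, map_mul (Ideal.Quotient.mk I) f g⟩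

variable (R) in
/-- The monomial ideal generated by the monomials with exponents in `S`. -/
noncomputable abbrev monomialIdeal (S : Set (σ →₀ ℕ)) : Ideal (MvPolynomial σ R) :=
  Ideal.span ((fun s => monomial s 1) '' S)

/-- The exponents of the standard monomials, those outside the monomial ideal generated by `S`. -/
def standardExponents (S : Set (σ →₀ ℕ)) : Set (σ →₀ ℕ) := {e | ∀ s ∈ S, ¬s ≤ e}

theorem mem_monomialIdeal_iff {S : Set (σ →₀ ℕ)} {f : MvPolynomial σ R} :
    f ∈ monomialIdeal R S ↔ ∀ e ∈ standardExponents S, coeff e f = 0 := by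
  rw [mem_ideal_span_monomial_image]
  refine forall_congr' fun e => ?_
  rw [mem_support_iff, ← not_imp_not, not_not, standardExponents]
  push Not
  rfl

variable (R) in
/-- The residue classes of the standard monomials modulo the monomial ideal generated by `S`. -/
noncomputable def standardMonomial (S : Set (σ →₀ ℕ)) (e : standardExponents S) :
    MvPolynomial σ R ⧸ monomialIdeal R S :=
  Ideal.Quotient.mk _ (monomial e 1)

theorem map_mk_restrictSupport (S T : Set (σ →₀ ℕ)) :
    (restrictSupport R T).map (Ideal.Quotient.mkₐ R (monomialIdeal R S)).toLinearMap =
      Submodule.span R (standardMonomial R S '' (Subtype.val ⁻¹' T)) := by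
  rw [restrictSupport_eq_span, Submodule.map_span, Set.image_image]
  refine le_antisymm (Submodule.span_le.2 ?_) (Submodule.span_mono ?_)
  · rintro _ ⟨e, he, rfl⟩
    by_cases hS : e ∈ standardExponents S
    · exact Submodule.subset_span ⟨⟨e, hS⟩, he, rfl⟩
    · have hmem : monomial e 1 ∈ monomialIdeal R S := mem_monomialIdeal_iff.2 fun e' he' => by
        classical
        rw [coeff_monomial, if_neg]
        rintro rfl
        exact hS he'
      simp [Ideal.Quotient.eq_zero_iff_mem.2 hmem]
  · rintro _ ⟨e, he, rfl⟩
    exact ⟨e, he, rfl⟩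

theorem linearIndependent_standardMonomial (S : Set (σ →₀ ℕ)) :
    LinearIndependent R (standardMonomial R S) := by
  refine ((basisMonomials σ R).linearIndependent.comp _ Subtype.val_injective).map
    (f := (Ideal.Quotient.mkₐ R (monomialIdeal R S)).toLinearMap) ?_
  rw [Set.range_comp, Subtype.range_coe, coe_basisMonomials, ← restrictSupport_eq_span,
    Submodule.disjoint_def]
  intro f hf hker
  have hmem := mem_monomialIdeal_iff.1 (Ideal.Quotient.eq_zero_iff_mem.1 hker)
  ext e
  by_contra he
  exact he (hmem e (hf (mem_support_iff.2 he)))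

variable (R) in
/-- The basis of standard monomials of the quotient by a monomial ideal. -/
noncomputable def standardBasis (S : Set (σ →₀ ℕ)) :
    Module.Basis (standardExponents S) R (MvPolynomial σ R ⧸ monomialIdeal R S) :=
  Module.Basis.mk (linearIndependent_standardMonomial S) <| by
    have h := map_mk_restrictSupport (R := R) S Set.univ
    rw [restrictSupport_univ, Submodule.map_top, Set.preimage_univ, Set.image_univ,
      LinearMap.range_eq_top.2 (Ideal.Quotient.mkₐ_surjective R _)] at h
    exact h.le

theorem quotientPiece_monomialIdeal (S : Set (σ →₀ ℕ)) :
    quotientPiece (monomialIdeal R S) = fun d => Submodule.span R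
      (standardBasis R S '' ((fun e => (e : σ →₀ ℕ).degree) ⁻¹' {d})) := by
  ext1 d
  rw [quotientPiece, homogeneousSubmodule_eq_finsupp_supported, standardBasis,
    Module.Basis.coe_mk]
  exact map_mk_restrictSupport S {e | e.degree = d}

theorem isInternal_quotientPiece_monomialIdeal [Nontrivial R] (S : Set (σ →₀ ℕ)) :
    DirectSum.IsInternal (quotientPiece (monomialIdeal R S)) := by
  rw [quotientPiece_monomialIdeal]
  exact isInternal_span_basis_image_fiber _ _

theorem finrank_quotientPiece_monomialIdeal {k : Type*} [Field k] (S : Set (σ →₀ ℕ)) (d : ℕ) :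
    Module.finrank k (quotientPiece (monomialIdeal k S) d) =
      {e ∈ standardExponents S | e.degree = d}.ncard := by
  rw [quotientPiece_monomialIdeal, finrank_span_basis_image,
    ← Set.ncard_image_of_injective _ Subtype.val_injective]
  congr 1
  ext e
  simp [and_comm]

end MonomialIdeal

section BinaryForms

/-- The exponents of the monomials `x ^ m` and `y ^ n` in two variables. -/
def boxCorners (m n : ℕ) : Set (Fin 2 →₀ ℕ) := {Finsupp.single 0 m, Finsupp.single 1 n}

theorem span_X_pow_X_pow {R : Type*} [CommRing R] (m n : ℕ) :
    (Ideal.span {X 0 ^ m, X 1 ^ n} : Ideal (MvPolynomial (Fin 2) R)) =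
      monomialIdeal R (boxCorners m n) := by
  rw [monomialIdeal, boxCorners, Set.image_pair, X_pow_eq_monomial, X_pow_eq_monomial]

theorem mem_standardExponents_boxCorners {m n : ℕ} {e : Fin 2 →₀ ℕ} :
    e ∈ standardExponents (boxCorners m n) ↔ e 0 < m ∧ e 1 < n := by
  simp [standardExponents, boxCorners, Finsupp.single_le_iff]

theorem finite_standardExponents_boxCorners (m n : ℕ) :
    (standardExponents (boxCorners m n)).Finite := by
  refine (Set.finite_Iic (Finsupp.single 0 m + Finsupp.single 1 n)).subset fun e he => ?_
  rw [mem_standardExponents_boxCorners] at he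
  intro a
  fin_cases a
  · simpa using he.1.le
  · simpa using he.2.le

theorem moduleFinite_quotient_boxCorners (R : Type*) [CommRing R] (m n : ℕ) :
    Module.Finite R (MvPolynomial (Fin 2) R ⧸ monomialIdeal R (boxCorners m n)) :=
  have := (finite_standardExponents_boxCorners m n).to_subtype
  Module.Finite.of_basis (standardBasis R (boxCorners m n))

theorem ncard_standardExponents_boxCorners_degree (m n d : ℕ) :
    {e ∈ standardExponents (boxCorners m n) | e.degree = d}.ncard =
      min m (d + 1) - (d + 1 - n) := by
  have hbij : Set.BijOn (fun e : Fin 2 →₀ ℕ => e 0)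
      {e ∈ standardExponents (boxCorners m n) | e.degree = d}
      (Finset.Ico (d + 1 - n) (min m (d + 1)) : Finset ℕ) := by
    simp only [mem_standardExponents_boxCorners, Finsupp.degree_eq_sum, Fin.sum_univ_two]
    refine ⟨fun e he => ?_, fun e he e' he' h => ?_, fun t ht => ?_⟩
    · simp only [Set.mem_ofPred_eq] at he
      simp only [Finset.mem_coe, Finset.mem_Ico]
      omega
    · ext a
      simp only [Set.mem_ofPred_eq] at he he' h
      fin_cases a <;> simp only [Fin.zero_eta, Fin.mk_one] <;> omega
    · simp only [Finset.mem_coe, Finset.mem_Ico] at ht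
      refine ⟨Finsupp.single 0 t + Finsupp.single 1 (d - t), ?_, by simp⟩
      simp only [Set.mem_ofPred_eq, Finsupp.add_apply, Finsupp.single_eq_same, ne_eq, zero_ne_one,
        one_ne_zero, not_false_eq_true, Finsupp.single_eq_of_ne, add_zero, zero_add]
      omega
  rw [hbij.ncard_eq, Set.ncard_coe_finset, Nat.card_Ico]

theorem coeff_eq_coeff_aeval_X_one {R : Type*} [CommSemiring R] {f : MvPolynomial (Fin 2) R}
    {e : Fin 2 →₀ ℕ} (hf : f.IsHomogeneous (e 0 + e 1)) :
    coeff e f = (aeval ![Polynomial.X, 1] f).coeff (e 0) := by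
  rw [← Polynomial.homogenize_eq_of_isHomogeneous hf rfl, Polynomial.coeff_homogenize, if_pos rfl,
    Polynomial.homogenize_eq_of_isHomogeneous hf rfl]

theorem natDegree_aeval_X_one_le {R : Type*} [CommSemiring R] {f : MvPolynomial (Fin 2) R} {d : ℕ}
    (hf : f.IsHomogeneous d) : (aeval ![(Polynomial.X : Polynomial R), 1] f).natDegree ≤ d := by
  have h := aeval_natDegree_le f hf.totalDegree_le ![(Polynomial.X : Polynomial R), 1] (n := 1)
    fun a => by fin_cases a <;> simp [Polynomial.natDegree_X_le]
  rwa [mul_one] at h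

theorem mem_monomialIdeal_boxCorners_iff {R : Type*} [CommRing R] {m n d : ℕ}
    {f : MvPolynomial (Fin 2) R} (hf : f.IsHomogeneous d) :
    f ∈ monomialIdeal R (boxCorners m n) ↔
      ∀ t < m, d < n + t → (aeval ![(Polynomial.X : Polynomial R), 1] f).coeff t = 0 := by
  simp only [mem_monomialIdeal_iff, mem_standardExponents_boxCorners]
  refine ⟨fun h t htm hdt => ?_, fun h e he => ?_⟩
  · obtain htd | hdt' := le_or_gt t d
    · obtain ⟨s, rfl⟩ := Nat.exists_eq_add_of_le htd
      set e : Fin 2 →₀ ℕ := Finsupp.single 0 t + Finsupp.single 1 s with he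
      have he0 : e 0 = t := by simp [he]
      have he1 : e 1 = s := by simp [he]
      rw [← he0, ← coeff_eq_coeff_aeval_X_one (by rwa [he0, he1])]
      exact h e (by omega)
    · exact Polynomial.coeff_eq_zero_of_natDegree_lt ((natDegree_aeval_X_one_le hf).trans_lt hdt')
  · by_cases hd : e 0 + e 1 = d
    · subst hd
      rw [coeff_eq_coeff_aeval_X_one hf]
      exact h _ he.1 (by omega)
    · exact hf.coeff_eq_zero (by rwa [Finsupp.degree_eq_sum, Fin.sum_univ_two])

variable {k : Type*} [Field k] {m n : ℕ}

theorem mem_monomialIdeal_boxCorners_of_X_add_X_pow_mul_mem {i j : ℕ}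
    (hchar : ∀ t : ℕ, 0 < t → t ≤ i + j → (t : k) ≠ 0) (hij : 2 * i + j + 2 ≤ m + n)
    {f : MvPolynomial (Fin 2) k} (hf : f.IsHomogeneous i)
    (h : (X 0 + X 1) ^ j * f ∈ monomialIdeal k (boxCorners m n)) :
    f ∈ monomialIdeal k (boxCorners m n) := by
  have hℓ : ((X 0 + X 1) ^ j * f).IsHomogeneous (i + j) := by
    have := (((isHomogeneous_X k 0).add (isHomogeneous_X k (1 : Fin 2))).pow j).mul hf
    rwa [one_mul, add_comm j] at this
  rw [mem_monomialIdeal_boxCorners_iff hℓ] at h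
  rw [mem_monomialIdeal_boxCorners_iff hf]
  refine coeff_eq_zero_of_coeff_X_add_one_pow_mul_eq_zero hchar hij (natDegree_aeval_X_one_le hf) ?_
  simpa using h

theorem finrank_quotientPiece_boxCorners (m n d : ℕ) :
    Module.finrank k (quotientPiece (monomialIdeal k (boxCorners m n)) d) =
      min m (d + 1) - (d + 1 - n) := by
  rw [finrank_quotientPiece_monomialIdeal, ncard_standardExponents_boxCorners_degree]

theorem isSL_X_add_X (hmn : 2 ≤ m + n)
    (hchar : ∀ t : ℕ, 0 < t → t < m + n - 1 → (t : k) ≠ 0) :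
    IsSL (quotientPiece (monomialIdeal k (boxCorners m n))) (Ideal.Quotient.mk _ (X 0 + X 1)) := by
  have := moduleFinite_quotient_boxCorners k m n
  refine isSL_of_injective (c := m + n - 2)
    ⟨_, (isHomogeneous_X k 0).add (isHomogeneous_X k 1), rfl⟩ ?_ ?_ ?_
  · intro i j hij
    rw [finrank_quotientPiece_boxCorners, finrank_quotientPiece_boxCorners]
    omega
  · intro i hi
    rw [finrank_quotientPiece_boxCorners]
    omega
  · rintro i j hij _ ⟨f, hf, rfl⟩ h0
    refine Ideal.Quotient.eq_zero_iff_mem.2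
      (mem_monomialIdeal_boxCorners_of_X_add_X_pow_mul_mem (i := i) (j := j)
        (fun t ht hle => hchar t ht (by omega)) (by omega) hf ?_)
    rw [← Ideal.Quotient.eq_zero_iff_mem, map_mul, map_pow]
    exact h0

theorem conjHilb_trapezoid {N : ℕ} (hmn : m ≤ n) (hmN : m ≤ N) :
    conjHilb (fun d => min (d + 1) (min m (m + n - 1 - d))) N =
      (Multiset.range m).map fun t => m + n - 1 - 2 * t := by
  have hlevel (t : ℕ) (ht : t < m) :
      {d | t + 1 ≤ min (d + 1) (min m (m + n - 1 - d))}.ncard = m + n - 1 - 2 * t := by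
    have hIco : {d | t + 1 ≤ min (d + 1) (min m (m + n - 1 - d))} =
        (Finset.Ico t (m + n - 1 - t) : Finset ℕ) := by
      ext d
      simp only [Set.mem_ofPred_eq, Finset.mem_coe, Finset.mem_Ico]
      omega
    rw [hIco, Set.ncard_coe_finset, Nat.card_Ico]
    omega
  rw [conjHilb_eq_map_range hmN (fun t ht => by rw [hlevel t ht]; omega) fun d => by omega]
  exact Multiset.map_congr rfl fun t ht => hlevel t (Multiset.mem_range.1 ht)

end BinaryForms

theorem natCast_ne_zero_of_lt_ringChar {R : Type*} [NonAssocSemiring R] {N t : ℕ}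
    (hchar : ringChar R = 0 ∨ N ≤ ringChar R) (ht : 0 < t) (htN : t < N) : (t : R) ≠ 0 := by
  rw [Ne, ringChar.spec]
  obtain h0 | hN := hchar
  · rw [h0, zero_dvd_iff]
    exact ht.ne'
  · exact Nat.not_dvd_of_pos_of_lt ht (htN.trans_le hN)

theorem clebsch_gordan_general
    {k : Type*} [Field k] (m n : ℕ) (hm : 0 < m) (hmn : m ≤ n)
    (hchar : ringChar k = 0 ∨ m + n - 1 ≤ ringChar k)
    (I : Ideal (MvPolynomial (Fin 2) k))
    (hI : I = Ideal.span {X 0 ^ m, X 1 ^ n})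
    (𝒜 : ℕ → Submodule k (MvPolynomial (Fin 2) k ⧸ I))
    (h𝒜 : ∀ d : ℕ, 𝒜 d = Submodule.span k
      ((Ideal.Quotient.mk I) '' {f | f.IsHomogeneous d})) :
    (∀ i : ℕ, Module.finrank k (𝒜 i) = min (i + 1) (min m (m + n - 1 - i))) ∧
    IsJordanTypeOf (LinearMap.mulLeft k (Ideal.Quotient.mk I (X 0 + X 1)))
      ((Multiset.range m).map (fun t => m + n - 1 - 2 * t)) ∧
    (Multiset.range m).map (fun t => m + n - 1 - 2 * t) =
      conjHilb (fun i => Module.finrank k (𝒜 i))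
        (Module.finrank k (MvPolynomial (Fin 2) k ⧸ I)) ∧
    IsSL 𝒜 (Ideal.Quotient.mk I (X 0 + X 1)) := by
  simp only [span_mk_image_isHomogeneous] at h𝒜
  obtain rfl : 𝒜 = quotientPiece I := funext h𝒜
  rw [span_X_pow_X_pow] at hI
  subst hI
  have := moduleFinite_quotient_boxCorners k m n
  have hH (d : ℕ) : Module.finrank k (quotientPiece (monomialIdeal k (boxCorners m n)) d) =
      min (d + 1) (min m (m + n - 1 - d)) := by
    rw [finrank_quotientPiece_boxCorners]
    omega
  have hSL := isSL_X_add_X (k := k) (m := m) (n := n) (by omega) fun _ =>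
    natCast_ne_zero_of_lt_ringChar hchar
  have hmA : m ≤ Module.finrank k (MvPolynomial (Fin 2) k ⧸ monomialIdeal k (boxCorners m n)) := by
    refine le_of_eq_of_le ?_ (Submodule.finrank_le (quotientPiece _ (m - 1)))
    rw [hH]
    omega
  have hconj := conjHilb_trapezoid hmn hmA
  simp only [← hH] at hconj
  refine ⟨hH, ?_, hconj.symm, hSL⟩
  rw [← hconj]
  exact hSL.isJordanTypeOf_conjHilb (isInternal_quotientPiece_monomialIdeal _)

/-- (Clebsch–Gordan)  Let `m ≤ n` be positive integers, `k` a field with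
`char k = 0` or `char k > m + n − 1`, and `R(m,n) = k[x,y]/(x^m, y^n)` with the
standard grading.  Then
`H(R(m,n)) = (1, 2, …, m−1, m, …, m, m−1, …, 2, 1)` (i.e.
`H(R(m,n))_i = min (i+1) (min m (m+n-1-i))`), and the linear form `ℓ = x + y`
has Jordan type `P_ℓ = (n+m−1, n+m−3, …, n−m+1) = H(R(m,n))^∨`; in particular
`ℓ` is a strong Lefschetz element of `R(m,n)`. -/
theorem clebsch_gordan
    {k : Type} [Field k] (m n : ℕ) (hm : 0 < m) (hmn : m ≤ n)
    (hchar : ringChar k = 0 ∨ m + n - 1 < ringChar k)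
    (I : Ideal (MvPolynomial (Fin 2) k))
    (hI : I = Ideal.span {X 0 ^ m, X 1 ^ n})
    (𝒜 : ℕ → Submodule k (MvPolynomial (Fin 2) k ⧸ I))
    (h𝒜 : ∀ d : ℕ, 𝒜 d = Submodule.span k
      ((Ideal.Quotient.mk I) '' {f | f.IsHomogeneous d})) :
    (∀ i : ℕ, Module.finrank k (𝒜 i) = min (i + 1) (min m (m + n - 1 - i))) ∧
    IsJordanTypeOf (LinearMap.mulLeft k (Ideal.Quotient.mk I (X 0 + X 1)))
      ((Multiset.range m).map (fun t => m + n - 1 - 2 * t)) ∧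
    (Multiset.range m).map (fun t => m + n - 1 - 2 * t) =
      conjHilb (fun i => Module.finrank k (𝒜 i))
        (Module.finrank k (MvPolynomial (Fin 2) k ⧸ I)) ∧
    IsSL 𝒜 (Ideal.Quotient.mk I (X 0 + X 1)) :=
  clebsch_gordan_general m n hm hmn (hchar.imp_right le_of_lt) I hI 𝒜 h𝒜
end
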